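/- Let V be a regular potential, let ψ be the solution of the gradient flow dψ_t = -V'(ψ_t)dt with ψ_0 = x₀ ∈ ℝ \ {0}, let Φ be the fundamental solution of dΦ_t = -V''(ψ_t)Φ_t dt with Φ_0 = 1, and let y₀ ∈ ℝ \ {0}. Fix ε > 0. Then the total variation distance ‖N(Φ_t y₀, ε Φ_t² ∫₀ᵗ (1/Φ_s)² ds) − N(0, ε/(2V''(0)))‖ converges to 0 as t → +∞. (Equivalently, the linearized diffusion y^ε_t, whose law at time t is the Gaussian N(Φ_t y₀, ε Φ_t² ∫₀ᵗ (1/Φ_s)² ds), converges in distribution as t → ∞ to a centered Gaussian with variance ε/(2V''(0)).) -/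

import Mathlib

open Filter MeasureTheory ProbabilityTheory

/-- Total variation distance between two measures on `ℝ`:
`sup_A |P(A) - Q(A)|` over measurable sets `A`. -/
noncomputable def tvDist (P Q : Measure ℝ) : ℝ :=
  ⨆ A : {s : Set ℝ // MeasurableSet s}, |(P A.1).toReal - (Q A.1).toReal|

lemma aux_decay (z z' : ℝ → ℝ) (k : ℝ) (hk : 0 < k) (hz : ∀ t, 0 ≤ z t)
    (h : ∀ η > 0, ∀ᶠ t in atTop, HasDerivAt z (z' t) t ∧ z' t ≤ -k * z t + η) :
    Tendsto z atTop (nhds 0) := by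
  rw [tendsto_order]
  refine ⟨fun a ha => Eventually.of_forall fun t => ha.trans_le (hz t), fun e he => ?_⟩
  obtain ⟨T, hT⟩ := eventually_atTop.1 (h (k * (e / 2)) (by positivity))
  have hd : ∀ t ≥ T, HasDerivAt (fun t => Real.exp (k * (t - T)) * (z t - e / 2))
      (Real.exp (k * (t - T)) * (k * 1) * (z t - e / 2) + Real.exp (k * (t - T)) * z' t) t := by
    intro t ht
    have h1 : HasDerivAt (fun t : ℝ => k * (t - T)) (k * 1) t :=
      ((hasDerivAt_id t).sub_const T).const_mul k
    exact h1.exp.mul ((hT t ht).1.sub_const (e / 2))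
  have hanti : AntitoneOn (fun t => Real.exp (k * (t - T)) * (z t - e / 2)) (Set.Ici T) := by
    apply antitoneOn_of_deriv_nonpos (convex_Ici T)
    · exact fun t ht => (hd t ht).continuousAt.continuousWithinAt
    · intro t ht
      rw [interior_Ici] at ht
      exact (hd t (le_of_lt ht)).differentiableAt.differentiableWithinAt
    · intro t ht
      rw [interior_Ici] at ht
      rw [(hd t (le_of_lt ht)).deriv]
      have h2 := (hT t (le_of_lt ht)).2
      have h3 := Real.exp_pos (k * (t - T))
      have : Real.exp (k * (t - T)) * (k * 1) * (z t - e / 2) + Real.exp (k * (t - T)) * z' t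
        = Real.exp (k * (t - T)) * (k * (z t - e / 2) + z' t) := by ring
      rw [this]
      exact mul_nonpos_of_nonneg_of_nonpos h3.le (by linarith)
  have hexp : Tendsto (fun t => Real.exp (k * (t - T)) * (e / 2)) atTop atTop := by
    apply Tendsto.atTop_mul_const (by positivity)
    apply Real.tendsto_exp_atTop.comp
    apply Tendsto.const_mul_atTop hk
    exact tendsto_atTop_add_const_right _ _ tendsto_id
  filter_upwards [hexp.eventually_gt_atTop (z T - e / 2), eventually_ge_atTop T] with t h1 h2
  have h3 := hanti (Set.mem_Ici.2 le_rfl) (Set.mem_Ici.2 h2) h2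
  simp only [sub_self, mul_zero, Real.exp_zero, one_mul] at h3
  have h4 := Real.exp_pos (k * (t - T))
  by_contra hcon
  push Not at hcon
  have : Real.exp (k * (t - T)) * (e / 2) ≤ Real.exp (k * (t - T)) * (z t - e / 2) :=
    mul_le_mul_of_nonneg_left (by linarith) h4.le
  linarith

lemma aux_flow (f ψ : ℝ → ℝ) (hf : ContDiff ℝ 1 f) (hz : ∀ x : ℝ, f x = 0 ↔ x = 0)
    (hf' : 0 < deriv f 0) (hψ : ∀ t : ℝ, 0 ≤ t → HasDerivAt ψ (-(f (ψ t))) t) :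
    Tendsto ψ atTop (nhds 0) := by
  have hdiff : Differentiable ℝ f := hf.differentiable (by norm_num)
  set g := dslope f 0 with hg
  have hgc : Continuous g := by
    rw [continuous_iff_continuousAt]
    intro x
    by_cases hx : x = 0
    · subst hx
      exact continuousAt_dslope_same.2 (hdiff 0)
    · exact (continuousAt_dslope_of_ne hx).2 (hdiff x).continuousAt
  have hfg : ∀ x, f x = x * g x := by
    intro x
    have := sub_smul_dslope f 0 x
    simp only [sub_zero, smul_eq_mul, (hz 0).2 rfl] at this
    exact this.symm
  have hg0 : g 0 = deriv f 0 := dslope_same f 0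
  have hgne : ∀ x, g x ≠ 0 := by
    intro x hx
    have h1 := hfg x
    rw [hx, mul_zero] at h1
    have := (hz x).1 h1
    subst this
    linarith
  have hgpos : ∀ x, 0 < g x := by
    intro x
    by_contra hcon
    push Not at hcon
    obtain ⟨c, -, hc⟩ := isPreconnected_univ.intermediate_value (Set.mem_univ x)
      (Set.mem_univ (0:ℝ)) hgc.continuousOn (show (0:ℝ) ∈ Set.Icc (g x) (g 0) from
        ⟨hcon, by rw [hg0]; exact hf'.le⟩)
    exact hgne c hc
  have hd : ∀ t, 0 ≤ t → HasDerivAt (fun t => ψ t ^ 2) (-(2 * g (ψ t) * ψ t ^ 2)) t := by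
    intro t ht
    refine ((hψ t ht).pow 2).congr_deriv ?_
    rw [hfg]; push_cast; ring
  have hanti : AntitoneOn (fun t => ψ t ^ 2) (Set.Ici 0) := by
    apply antitoneOn_of_deriv_nonpos (convex_Ici 0)
    · exact fun t ht => (hd t ht).continuousAt.continuousWithinAt
    · intro t ht
      rw [interior_Ici] at ht
      exact (hd t (le_of_lt ht)).differentiableAt.differentiableWithinAt
    · intro t ht
      rw [interior_Ici] at ht
      rw [(hd t (le_of_lt ht)).deriv]
      have := hgpos (ψ t)
      have : 0 ≤ 2 * g (ψ t) * ψ t ^ 2 := by positivity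
      linarith
  obtain ⟨m, -, hm⟩ := (isCompact_Icc (a := -|ψ 0|) (b := |ψ 0|)).exists_isMinOn
    ⟨0, by simp⟩ hgc.continuousOn
  have hsq : Tendsto (fun t => ψ t ^ 2) atTop (nhds 0) := by
    apply aux_decay _ (fun t => -(2 * g (ψ t) * ψ t ^ 2)) (2 * g m) (by have := hgpos m; linarith)
      (fun t => sq_nonneg _)
    intro η hη
    filter_upwards [eventually_ge_atTop 0] with t ht
    refine ⟨hd t ht, ?_⟩
    have h1 : ψ t ^ 2 ≤ ψ 0 ^ 2 := hanti (Set.mem_Ici.2 le_rfl) (Set.mem_Ici.2 ht) ht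
    have h2 : g m ≤ g (ψ t) := hm (abs_le.1 (sq_le_sq.1 h1))
    nlinarith [mul_le_mul_of_nonneg_right h2 (sq_nonneg (ψ t))]
  have := hsq.sqrt
  simp only [Real.sqrt_sq_eq_abs, Real.sqrt_zero] at this
  exact (tendsto_zero_iff_abs_tendsto_zero _).2 this

lemma aux_linear (a A : ℝ → ℝ) (l : ℝ) (hl : 0 < l)
    (hA : ∀ t, HasDerivAt A (a t) t) (hlim : Tendsto a atTop (nhds l)) :
    Tendsto (fun t => Real.exp (-A t)) atTop (nhds 0) ∧
    Tendsto (fun t => Real.exp (-A t) ^ 2 * ∫ s in (0:ℝ)..t, (1 / Real.exp (-A s)) ^ 2) atTop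
      (nhds (1 / (2 * l))) := by
  have hAc : Continuous A := continuous_iff_continuousAt.2 fun t => (hA t).continuousAt
  have ha : ∀ᶠ t in atTop, l / 2 < a t := hlim.eventually_const_lt (by linarith)
  have hE : ∀ t, HasDerivAt (fun t => Real.exp (-A t)) (Real.exp (-A t) * -a t) t :=
    fun t => (hA t).neg.exp
  constructor
  · apply aux_decay _ (fun t => Real.exp (-A t) * -a t) (l / 2) (by positivity)
      (fun t => (Real.exp_pos _).le)
    intro η hη
    filter_upwards [ha] with t ht
    refine ⟨hE t, ?_⟩
    nlinarith [Real.exp_pos (-A t)]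
  · have hc : Continuous (fun s => (1 / Real.exp (-A s)) ^ 2) := by
      apply Continuous.pow
      exact continuous_const.div (by fun_prop) (fun s => (Real.exp_pos _).ne')
    set v := fun t => Real.exp (-A t) ^ 2 * ∫ s in (0:ℝ)..t, (1 / Real.exp (-A s)) ^ 2 with hv
    have hvd : ∀ t, HasDerivAt v (1 - 2 * a t * v t) t := by
      intro t
      have h1 := ((hE t).pow 2).mul (intervalIntegral.integral_hasDerivAt_right
        (hc.intervalIntegrable 0 t) (hc.stronglyMeasurableAtFilter _ _) hc.continuousAt)
      refine h1.congr_deriv ?_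
      have := (Real.exp_pos (-A t)).ne'
      simp only [hv, Pi.pow_apply]
      field_simp
      push_cast
      ring
    have hsq : Tendsto (fun t => (v t - 1 / (2 * l)) ^ 2) atTop (nhds 0) := by
      apply aux_decay _ (fun t => 2 * (v t - 1 / (2 * l)) * (1 - 2 * a t * v t)) l hl
        (fun t => sq_nonneg _)
      intro η hη
      have hg : Tendsto (fun t => (1 - a t / l) ^ 2 / l) atTop (nhds 0) := by
        have := ((tendsto_const_nhds (x := (1:ℝ))).sub (hlim.div_const l)).pow 2 |>.div_const l
        simpa [hl.ne'] using this
      filter_upwards [ha, hg.eventually_lt_const hη] with t ht h2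
      constructor
      · refine (((hvd t).sub_const (1 / (2 * l))).pow 2).congr_deriv ?_
        push_cast; ring
      · set u := v t - 1 / (2 * l) with hu
        have e1 : 1 - 2 * a t * v t = -2 * a t * u + (1 - a t / l) := by
          have : v t = u + 1 / (2 * l) := by rw [hu]; ring
          rw [this]; field_simp; ring
        rw [e1]
        set g := 1 - a t / l
        have h3 : 2 * u * g ≤ l * u ^ 2 + g ^ 2 / l := by
          have : 0 ≤ (l * u - g) ^ 2 / l := by positivity
          have e : (l * u - g) ^ 2 / l = l * u ^ 2 + g ^ 2 / l - 2 * u * g := by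
            field_simp; ring
          linarith
        nlinarith [mul_le_mul_of_nonneg_right ht.le (sq_nonneg u)]
    have := hsq.sqrt
    simp only [Real.sqrt_sq_eq_abs, Real.sqrt_zero] at this
    have := (tendsto_zero_iff_abs_tendsto_zero _).2 this
    exact tendsto_sub_nhds_zero_iff.1 this

lemma aux_gauss_meas (m : ℝ) (v : NNReal) (hv : v ≠ 0) (A : Set ℝ) :
    (gaussianReal m v A).toReal = ∫ x in A, gaussianPDFReal m v x := by
  rw [gaussianReal_apply_eq_integral m hv, ENNReal.toReal_ofReal]
  exact integral_nonneg fun x => gaussianPDFReal_nonneg _ _ _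

lemma aux_tv_le (m m' : ℝ) (v v' : NNReal) (hv : v ≠ 0) (hv' : v' ≠ 0) :
    tvDist (gaussianReal m v) (gaussianReal m' v') ≤
      ∫ x, max (gaussianPDFReal m' v' x - gaussianPDFReal m v x) 0 := by
  have hi := integrable_gaussianPDFReal m v
  have hi' := integrable_gaussianPDFReal m' v'
  have key : ∀ A : Set ℝ, MeasurableSet A →
      (gaussianReal m' v' A).toReal - (gaussianReal m v A).toReal ≤
      ∫ x, max (gaussianPDFReal m' v' x - gaussianPDFReal m v x) 0 := by
    intro A hA
    rw [aux_gauss_meas m v hv, aux_gauss_meas m' v' hv',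
      ← integral_sub hi'.integrableOn hi.integrableOn]
    have hmax : Integrable (fun x => max (gaussianPDFReal m' v' x - gaussianPDFReal m v x) 0) :=
      (hi'.sub hi).pos_part
    calc _ ≤ ∫ x in A, max (gaussianPDFReal m' v' x - gaussianPDFReal m v x) 0 :=
          integral_mono (hi'.sub hi).integrableOn hmax.integrableOn (fun x => le_max_left _ _)
      _ ≤ _ := setIntegral_le_integral hmax (Eventually.of_forall fun x => le_max_right _ _)
  have : Nonempty {s : Set ℝ // MeasurableSet s} := ⟨⟨∅, MeasurableSet.empty⟩⟩
  apply ciSup_le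
  rintro ⟨A, hA⟩
  have h1 := key A hA
  have h2 := key Aᶜ hA.compl
  have c : ∀ (μ : Measure ℝ) [IsProbabilityMeasure μ], (μ Aᶜ).toReal = 1 - (μ A).toReal := by
    intro μ _
    exact probReal_compl_eq_one_sub hA
  rw [c, c] at h2
  rw [abs_le]
  constructor <;> simp only <;> linarith

lemma aux_scheffe (m : ℝ → ℝ) (v : ℝ → NNReal) (m' : ℝ) (v' : NNReal) (hv' : v' ≠ 0)
    (hm : Tendsto m atTop (nhds m')) (hv : Tendsto v atTop (nhds v')) :
    Tendsto (fun t => tvDist (gaussianReal (m t) (v t)) (gaussianReal m' v')) atTop (nhds 0) := by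
  have hb : ∀ᶠ t in atTop, v t ≠ 0 := hv.eventually_ne hv'
  have hlim : Tendsto (fun t => ∫ x, max (gaussianPDFReal m' v' x -
      gaussianPDFReal (m t) (v t) x) 0) atTop (nhds (∫ x : ℝ, (0:ℝ))) := by
    apply tendsto_integral_filter_of_dominated_convergence (gaussianPDFReal m' v')
    · refine Eventually.of_forall fun t => ?_
      exact (((integrable_gaussianPDFReal m' v').sub
        (integrable_gaussianPDFReal (m t) (v t))).pos_part).aestronglyMeasurable
    · refine Eventually.of_forall fun t => Eventually.of_forall fun x => ?_
      have h1 := gaussianPDFReal_nonneg m' v' x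
      have h2 := gaussianPDFReal_nonneg (m t) (v t) x
      rw [Real.norm_eq_abs, abs_of_nonneg (le_max_right _ _)]
      exact max_le (by linarith) h1
    · exact integrable_gaussianPDFReal m' v'
    · refine Eventually.of_forall fun x => ?_
      have hvr : Tendsto (fun t => (v t : ℝ)) atTop (nhds (v' : ℝ)) :=
        (NNReal.continuous_coe.tendsto _).comp hv
      have hpos : (0:ℝ) < v' := by
        have := pos_iff_ne_zero.2 hv'
        exact_mod_cast this
      have hp : Tendsto (fun t => gaussianPDFReal (m t) (v t) x) atTop
          (nhds (gaussianPDFReal m' v' x)) := by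
        simp only [gaussianPDFReal]
        apply Tendsto.mul
        · apply Tendsto.inv₀
          · exact (hvr.const_mul _).sqrt
          · exact (Real.sqrt_pos.2 (by positivity)).ne'
        · apply (Real.continuous_exp.tendsto _).comp
          exact ((hm.const_sub x).pow 2).neg.div (hvr.const_mul 2) (by positivity)
      have := (hp.const_sub (gaussianPDFReal m' v' x)).max (tendsto_const_nhds (x := (0:ℝ)))
      simpa using this
  rw [integral_zero] at hlim
  refine tendsto_of_tendsto_of_tendsto_of_le_of_le' tendsto_const_nhds hlim ?_ ?_
  · exact Eventually.of_forall fun t => Real.iSup_nonneg fun A => abs_nonneg _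
  · filter_upwards [hb] with t ht
    have hfinal := aux_tv_le (m t) m' (v t) v' ht hv'
    exact hfinal

/-- For a regular potential `V`, the law
`N(Φ t y₀, ε Φ t² ∫₀ᵗ (1/Φ s)² ds)` of the linearized diffusion at time `t`
converges in total variation, as `t → +∞`, to `N(0, ε / (2 V''(0)))`. -/
theorem linearized_diffusion_tendsto_equilibrium
    (V ψ Φ : ℝ → ℝ) (x₀ y₀ ε : ℝ)
    (hV : ContDiff ℝ 3 V)
    (hV0 : V 0 = 0)
    (hcrit : ∀ x : ℝ, deriv V x = 0 ↔ x = 0)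
    (hV''0 : 0 < deriv (deriv V) 0)
    (hcoercive : Tendsto V (Filter.cocompact ℝ) atTop)
    (hx₀ : x₀ ≠ 0)
    (hψ0 : ψ 0 = x₀)
    (hψ : ∀ t : ℝ, 0 ≤ t → HasDerivAt ψ (-(deriv V (ψ t))) t)
    (hΦ0 : Φ 0 = 1)
    (hΦ : ∀ t : ℝ, 0 ≤ t → HasDerivAt Φ (-(deriv (deriv V) (ψ t)) * Φ t) t)
    (hy₀ : y₀ ≠ 0)
    (hε : 0 < ε) :
    Tendsto
      (fun t : ℝ =>
        tvDist
          (gaussianReal (Φ t * y₀)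
            (ε * (Φ t) ^ 2 * ∫ s in (0:ℝ)..t, (1 / Φ s) ^ 2).toNNReal)
          (gaussianReal 0 (ε / (2 * deriv (deriv V) 0)).toNNReal))
      atTop (nhds 0) := by
  have hV1 : ContDiff ℝ 2 (deriv V) := by
    have : ContDiff ℝ (2 + 1) V := by norm_num; exact hV
    exact (contDiff_succ_iff_deriv.1 this).2.2
  have hV2 : ContDiff ℝ 1 (deriv (deriv V)) := by
    have : ContDiff ℝ (1 + 1) (deriv V) := by norm_num; exact hV1
    exact (contDiff_succ_iff_deriv.1 this).2.2
  have hψlim : Tendsto ψ atTop (nhds 0) :=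
    aux_flow (deriv V) ψ (hV1.of_le (by norm_num)) hcrit hV''0 hψ
  set l := deriv (deriv V) 0 with hl
  have hψc : Continuous (fun t : ℝ => ψ (max t 0)) := by
    rw [continuous_iff_continuousAt]
    intro t
    exact ContinuousAt.comp (f := fun t : ℝ => max t 0)
      (hψ _ (le_max_right t 0)).continuousAt (by fun_prop)
  set a : ℝ → ℝ := fun t => deriv (deriv V) (ψ (max t 0)) with ha
  have hac : Continuous a := hV2.continuous.comp hψc
  have halim : Tendsto a atTop (nhds l) := by
    have h1 : Tendsto (fun t => deriv (deriv V) (ψ t)) atTop (nhds l) :=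
      (hV2.continuous.tendsto 0).comp hψlim
    refine h1.congr' ?_
    filter_upwards [eventually_ge_atTop 0] with t ht
    simp only [ha, max_eq_left ht]
  set A : ℝ → ℝ := fun t => ∫ s in (0:ℝ)..t, a s with hA
  have hAd : ∀ t, HasDerivAt A (a t) t := fun t =>
    intervalIntegral.integral_hasDerivAt_right (hac.intervalIntegrable 0 t)
      (hac.stronglyMeasurableAtFilter _ _) hac.continuousAt
  have hΦexp : ∀ t, 0 ≤ t → Φ t = Real.exp (-A t) := by
    intro t ht
    have hd : ∀ s, 0 ≤ s → HasDerivAt (fun s => Φ s * Real.exp (A s)) 0 s := by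
      intro s hs
      refine ((hΦ s hs).mul (hAd s).exp).congr_deriv ?_
      simp only [ha, max_eq_left hs]
      ring
    have h1 := constant_of_has_deriv_right_zero (f := fun s => Φ s * Real.exp (A s)) (a := 0)
      (b := t) (fun s hs => (hd s hs.1).continuousAt.continuousWithinAt)
      (fun s hs => (hd s hs.1).hasDerivWithinAt) t ⟨ht, le_rfl⟩
    have hA0 : A 0 = 0 := by simp [hA]
    simp only [hA0, hΦ0, Real.exp_zero, mul_one] at h1
    rw [Real.exp_neg]
    exact eq_inv_of_mul_eq_one_left h1
  obtain ⟨h1, h2⟩ := aux_linear a A l hV''0 hAd halim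
  have hΦlim : Tendsto Φ atTop (nhds 0) := by
    refine h1.congr' ?_
    filter_upwards [eventually_ge_atTop 0] with t ht
    exact (hΦexp t ht).symm
  have hvlim : Tendsto (fun t => ε * (Φ t) ^ 2 * ∫ s in (0:ℝ)..t, (1 / Φ s) ^ 2) atTop
      (nhds (ε / (2 * l))) := by
    have h3 := h2.const_mul ε
    rw [mul_one_div] at h3
    refine h3.congr' ?_
    filter_upwards [eventually_ge_atTop 0] with t ht
    rw [hΦexp t ht, mul_assoc]
    congr 2
    apply intervalIntegral.integral_congr
    intro s hs
    rw [Set.uIcc_of_le ht] at hs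
    simp only [hΦexp s hs.1]
  apply aux_scheffe
  · exact (Real.toNNReal_pos.2 (by positivity)).ne'
  · simpa using hΦlim.mul_const y₀
  · exact (continuous_real_toNNReal.tendsto _).comp hvlim
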